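/- Let λ₁, λ₂ be real numbers with λ₁ λ₂ ≠ 0 and λ₁² ≠ λ₂², and let a be the real 2×3 matrix with rows (λ₁, 0, 0) and (0, λ₂, 0). Consider the action of SO(3) × SO(2) on 2×3 real matrices given by (A, R) · a = R a Aᵀ (for A ∈ SO(3), R ∈ SO(2)). Then the stabilizer of a, i.e. { (A, R) ∈ SO(3) × SO(2) : R a Aᵀ = a }, consists of exactly two elements: the identity (I₃, I₂) and the pair (diag(−1, −1, 1), −I₂). In particular, the stabilizer is isomorphic to ℤ/2ℤ. -/

import Mathlib

/-!
If `R a Aᵀ = a` with `A` and `R` orthogonal, then `R` commutes with `a aᵀ = diag(λ₁², λ₂²)`.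
As `λ₁² ≠ λ₂²`, this makes `R` diagonal, so `R = ±1` because `R` lies in `SO(2)`. The relation
`R a = a A` then determines the first two rows of `A`, since `λ₁` and `λ₂` are nonzero, and
orthogonality together with `det A = 1` determines the third (`stabilizer_subset`).
-/

open Matrix

/-- A rotation of the plane that commutes with a diagonal matrix with distinct diagonal entries
is `1` or `-1`. -/
lemma rotation_eq_of_commute {d1 d2 : ℝ} (hd : d1 ≠ d2) {R : Matrix (Fin 2) (Fin 2) ℝ}
    (hR : R * Rᵀ = 1) (hdet : R.det = 1)
    (hcomm : R * !![d1, 0; 0, d2] = !![d1, 0; 0, d2] * R) : R = 1 ∨ R = -1 := by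
  have e01 := congrFun (congrFun hcomm 0) 1
  have e10 := congrFun (congrFun hcomm 1) 0
  have n00 := congrFun (congrFun hR 0) 0
  simp [Matrix.mul_apply, Fin.sum_univ_two] at e01 e10 n00
  have q : R 0 1 = 0 :=
    (mul_eq_zero.mp (by linear_combination e01 : (d2 - d1) * R 0 1 = 0)).resolve_left
      (sub_ne_zero.mpr hd.symm)
  have r : R 1 0 = 0 :=
    (mul_eq_zero.mp (by linear_combination e10 : (d1 - d2) * R 1 0 = 0)).resolve_left
      (sub_ne_zero.mpr hd)
  rw [Matrix.det_fin_two, q, r] at hdet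
  rw [q] at n00
  have hp : (R 0 0 - 1) * (R 0 0 + 1) = 0 := by linear_combination n00
  rcases mul_eq_zero.mp hp with hp | hp
  · have p : R 0 0 = 1 := by linarith
    have s : R 1 1 = 1 := by rw [p] at hdet; linarith
    left
    ext i j
    fin_cases i <;> fin_cases j <;> simp [p, q, r, s]
  · have p : R 0 0 = -1 := by linarith
    have s : R 1 1 = -1 := by rw [p] at hdet; linarith
    right
    ext i j
    fin_cases i <;> fin_cases j <;> simp [p, q, r, s]

/-- A matrix in `SO(3)` whose first two rows are `(e, 0, 0)` and `(0, e, 0)` with `e² = 1` is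
`diag(e, e, 1)`. -/
lemma rotation_eq_of_rows {e : ℝ} (he : e * e = 1) {A : Matrix (Fin 3) (Fin 3) ℝ}
    (hA : A * Aᵀ = 1) (hdet : A.det = 1)
    (h : e • !![1, 0, 0; 0, 1, 0] = (!![1, 0, 0; 0, 1, 0] : Matrix (Fin 2) (Fin 3) ℝ) * A) :
    A = !![e, 0, 0; 0, e, 0; 0, 0, 1] := by
  have a00 := congrFun (congrFun h 0) 0
  have a01 := congrFun (congrFun h 0) 1
  have a02 := congrFun (congrFun h 0) 2
  have a10 := congrFun (congrFun h 1) 0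
  have a11 := congrFun (congrFun h 1) 1
  have a12 := congrFun (congrFun h 1) 2
  have o02 := congrFun (congrFun hA 0) 2
  have o12 := congrFun (congrFun hA 1) 2
  simp [Matrix.mul_apply, Fin.sum_univ_three] at a00 a01 a02 a10 a11 a12 o02 o12
  have he0 : e ≠ 0 := by rintro rfl; simp at he
  simp [← a00, ← a01, ← a02, ← a10, ← a11, ← a12, he0] at o02 o12
  rw [Matrix.det_fin_three] at hdet
  simp [← a00, ← a01, ← a02, ← a10, ← a11, ← a12, o02, o12, he] at hdet
  ext i j
  fin_cases i <;> fin_cases j <;>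
    simp [← a00, ← a01, ← a02, ← a10, ← a11, ← a12, o02, o12, hdet]

lemma stabilizer_subset {l1 l2 : ℝ} (h0 : l1 * l2 ≠ 0) (h1 : l1 ^ 2 ≠ l2 ^ 2)
    {A : Matrix (Fin 3) (Fin 3) ℝ} {R : Matrix (Fin 2) (Fin 2) ℝ}
    (hA : A * Aᵀ = 1) (hAdet : A.det = 1) (hR : R * Rᵀ = 1) (hRdet : R.det = 1)
    (h : R * (!![l1, 0, 0; 0, l2, 0] : Matrix (Fin 2) (Fin 3) ℝ) * Aᵀ
      = !![l1, 0, 0; 0, l2, 0]) :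
    (A = 1 ∧ R = 1) ∨ (A = !![-1, 0, 0; 0, -1, 0; 0, 0, 1] ∧ R = -1) := by
  have hA' : Aᵀ * A = 1 := mul_eq_one_comm.mp hA
  have hR' : Rᵀ * R = 1 := mul_eq_one_comm.mp hR
  set a : Matrix (Fin 2) (Fin 3) ℝ := !![l1, 0, 0; 0, l2, 0] with ha
  have hRa : R * a = a * A := by
    rw [← congrArg (· * A) h]
    simp only [Matrix.mul_assoc, hA', Matrix.mul_one]
  have hD : a * aᵀ = !![l1 ^ 2, 0; 0, l2 ^ 2] := by
    ext i j
    fin_cases i <;> fin_cases j <;> simp [ha, Matrix.mul_apply, Fin.sum_univ_three, sq]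
  have hcomm : R * (a * aᵀ) = a * aᵀ * R := by
    -- `a aᵀ = (R a Aᵀ)(R a Aᵀ)ᵀ = R (a aᵀ) Rᵀ`
    have key : a * aᵀ = R * (a * aᵀ) * Rᵀ := by
      conv_lhs => rw [← h]
      rw [Matrix.transpose_mul, Matrix.transpose_mul, Matrix.transpose_transpose]
      simp only [Matrix.mul_assoc]
      rw [← Matrix.mul_assoc Aᵀ A, hA', Matrix.one_mul]
    conv_rhs => rw [key]
    rw [Matrix.mul_assoc _ Rᵀ R, hR', Matrix.mul_one]
  rw [hD] at hcomm
  -- Rescaling the rows of `a` by `λ₁⁻¹` and `λ₂⁻¹` reduces it to the projection `ℝ³ → ℝ²`.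
  have hscale : (!![l1⁻¹, 0; 0, l2⁻¹] : Matrix (Fin 2) (Fin 2) ℝ) * a
      = !![1, 0, 0; 0, 1, 0] := by
    simp [ha, left_ne_zero_of_mul h0, right_ne_zero_of_mul h0]
  have hrows := congrArg ((!![l1⁻¹, 0; 0, l2⁻¹] : Matrix (Fin 2) (Fin 2) ℝ) * ·) hRa
  simp only [← Matrix.mul_assoc _ a A, hscale] at hrows
  rcases rotation_eq_of_commute h1 hR hRdet hcomm with rfl | rfl
  · left
    refine ⟨?_, rfl⟩
    rw [Matrix.one_mul, hscale] at hrows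
    rw [rotation_eq_of_rows (e := 1) (by norm_num) hA hAdet (by rwa [one_smul]),
      Matrix.one_fin_three]
  · right
    refine ⟨?_, rfl⟩
    rw [Matrix.neg_mul, Matrix.one_mul, Matrix.mul_neg, hscale] at hrows
    exact rotation_eq_of_rows (e := -1) (by norm_num) hA hAdet (by rwa [neg_one_smul])

/-- for `λ₁λ₂ ≠ 0` and `λ₁² ≠ λ₂²`, the stabilizer of the 2×3
matrix `a = [[λ₁,0,0],[0,λ₂,0]]` under the action `(A,R)·a = R a Aᵀ` of
`SO(3) × SO(2)` consists of exactly the two elements `(I₃, I₂)` and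
`(diag(-1,-1,1), -I₂)`; in particular it has exactly two elements (hence is
isomorphic to `ℤ/2ℤ`). -/
theorem stmt18 (l1 l2 : ℝ) (h0 : l1 * l2 ≠ 0) (h1 : l1 ^ 2 ≠ l2 ^ 2) :
    {AR : Matrix (Fin 3) (Fin 3) ℝ × Matrix (Fin 2) (Fin 2) ℝ |
        (AR.1 * AR.1ᵀ = 1 ∧ AR.1.det = 1) ∧
        (AR.2 * AR.2ᵀ = 1 ∧ AR.2.det = 1) ∧
        AR.2 * (!![l1, 0, 0; 0, l2, 0] : Matrix (Fin 2) (Fin 3) ℝ) * AR.1ᵀ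
          = !![l1, 0, 0; 0, l2, 0]}
      = {((1 : Matrix (Fin 3) (Fin 3) ℝ), (1 : Matrix (Fin 2) (Fin 2) ℝ)),
         ((!![-1, 0, 0; 0, -1, 0; 0, 0, 1] : Matrix (Fin 3) (Fin 3) ℝ),
           (-1 : Matrix (Fin 2) (Fin 2) ℝ))} ∧
    Set.ncard
      {AR : Matrix (Fin 3) (Fin 3) ℝ × Matrix (Fin 2) (Fin 2) ℝ |
        (AR.1 * AR.1ᵀ = 1 ∧ AR.1.det = 1) ∧
        (AR.2 * AR.2ᵀ = 1 ∧ AR.2.det = 1) ∧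
        AR.2 * (!![l1, 0, 0; 0, l2, 0] : Matrix (Fin 2) (Fin 3) ℝ) * AR.1ᵀ
          = !![l1, 0, 0; 0, l2, 0]} = 2 := by
  rw [and_iff_left_of_imp]
  · ext ⟨A, R⟩
    simp only [Set.mem_ofPred_eq, Set.mem_insert_iff, Set.mem_singleton_iff, Prod.mk.injEq]
    constructor
    · rintro ⟨⟨hA, hAdet⟩, ⟨hR, hRdet⟩, h⟩
      exact stabilizer_subset h0 h1 hA hAdet hR hRdet h
    · rintro (⟨rfl, rfl⟩ | ⟨rfl, rfl⟩)
      · simp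
      · refine ⟨⟨?_, ?_⟩, ⟨?_, ?_⟩, ?_⟩
        · ext i j
          fin_cases i <;> fin_cases j <;> simp [Matrix.mul_apply, Fin.sum_univ_three]
        · simp [Matrix.det_fin_three]
        · simp
        · simp [Matrix.det_fin_two]
        · ext i j
          fin_cases i <;> fin_cases j <;> simp [Matrix.mul_apply, Fin.sum_univ_three]
  · intro h
    rw [h]
    refine Set.ncard_pair fun hne => ?_
    have := congrFun (congrFun (congrArg Prod.snd hne) 0) 0
    norm_num at this
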